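/- arXiv:2305.13350 — 3 statements merged into one kernel-verified Lean document; each statement's English description precedes it below -/
import Mathlib

section
/- Let a and p be real numbers with a ≠ 0, and let h : ℝ → ℝ be a twice differentiable function satisfying h''(x) + a² x h'(x) + a² p h(x) = 0 for all real x. Then h(x) = √(2π) h(0) Λ^e_{p-1}(ax) + (√(2π) h'(0)/a) Λ^o_{p-1}(ax) for all x. In particular, if h is even then h(x) = √(2π) h(0) Λ^e_{p-1}(ax), and if h is odd then h(x) = (√(2π) h'(0)/a) Λ^o_{p-1}(ax). -/
open MeasureTheory Filter Real

/-- The even kernel function `Λ^e_p(x)`. -/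
noncomputable def LamE (p x : ℝ) : ℝ :=
  (1 / Real.sqrt (2 * Real.pi)) *
    ∑' n : ℕ, (-1 : ℝ) ^ n * (∏ k ∈ Finset.range n, (p + 2 * (k : ℝ) + 1)) * x ^ (2 * n) /
      (Nat.factorial (2 * n) : ℝ)

/-- The odd kernel function `Λ^o_p(x)`. -/
noncomputable def LamO (p x : ℝ) : ℝ :=
  (1 / Real.sqrt (2 * Real.pi)) *
    ∑' n : ℕ, (-1 : ℝ) ^ n * (∏ k ∈ Finset.range n, (p + 2 * ((k : ℝ) + 1))) * x ^ (2 * n + 1) /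
      (Nat.factorial (2 * n + 1) : ℝ)

noncomputable def tE (p : ℝ) (n : ℕ) (x : ℝ) : ℝ :=
  (-1 : ℝ) ^ n * (∏ k ∈ Finset.range n, (p + 2 * (k : ℝ) + 1)) * x ^ (2 * n) /
      (Nat.factorial (2 * n) : ℝ)

noncomputable def tO (p : ℝ) (n : ℕ) (x : ℝ) : ℝ :=
  (-1 : ℝ) ^ n * (∏ k ∈ Finset.range n, (p + 2 * ((k : ℝ) + 1))) * x ^ (2 * n + 1) /
      (Nat.factorial (2 * n + 1) : ℝ)

lemma fact_step (m : ℕ) : ((Nat.factorial (m + 1) : ℕ) : ℝ) = ((m : ℝ) + 1) * (Nat.factorial m : ℝ) := by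
  rw [Nat.factorial_succ]; push_cast; ring

lemma tE_succ (p : ℝ) (n : ℕ) (x : ℝ) :
    tE p (n + 1) x = -((p + 2 * n + 1) * x ^ 2 / ((2 * n + 1) * (2 * n + 2))) * tE p n x := by
  unfold tE
  rw [show 2 * (n + 1) = 2 * n + 1 + 1 by ring, fact_step, fact_step, Finset.prod_range_succ]
  have h1 : (Nat.factorial (2 * n) : ℝ) ≠ 0 := by positivity
  have h2 : (2 * (n : ℝ) + 1) ≠ 0 := by positivity
  have h3 : (2 * (n : ℝ) + 2) ≠ 0 := by positivity
  have h4 : (2 * (n : ℝ) + 1 + 1) ≠ 0 := by positivity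
  push_cast
  field_simp
  ring

lemma tO_succ (p : ℝ) (n : ℕ) (x : ℝ) :
    tO p (n + 1) x = -((p + 2 * n + 2) * x ^ 2 / ((2 * n + 2) * (2 * n + 3))) * tO p n x := by
  unfold tO
  rw [show 2 * (n + 1) + 1 = 2 * n + 1 + 1 + 1 by ring, fact_step, fact_step,
    Finset.prod_range_succ]
  have h1 : (Nat.factorial (2 * n + 1) : ℝ) ≠ 0 := by positivity
  have h3 : (2 * (n : ℝ) + 2) ≠ 0 := by positivity
  have h2 : (2 * (n : ℝ) + 3) ≠ 0 := by positivity
  have h4 : (2 * (n : ℝ) + 1 + 1) ≠ 0 := by positivity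
  have h5 : (2 * (n : ℝ) + 1 + 1 + 1) ≠ 0 := by positivity
  push_cast
  field_simp
  ring

lemma ratio_bd (p m x c : ℝ) (hm : 1 ≤ m) (hc : 2 * (|p| + 1) * x ^ 2 ≤ c) (hc0 : 0 < c) :
    ‖-((p + m) * x ^ 2 / (m * c))‖ ≤ 1 / 2 := by
  have hm0 : 0 < m := by linarith
  rw [norm_neg, Real.norm_eq_abs, abs_div, abs_mul, abs_of_pos (mul_pos hm0 hc0),
    abs_of_nonneg (sq_nonneg x), div_le_iff₀ (mul_pos hm0 hc0)]
  have h1 : |p + m| ≤ (|p| + 1) * m := by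
    have := abs_add_le p m
    rw [abs_of_pos hm0] at this
    nlinarith [abs_nonneg p]
  calc |p + m| * x ^ 2 ≤ (|p| + 1) * m * x ^ 2 := by gcongr
    _ = 1 / 2 * (m * (2 * (|p| + 1) * x ^ 2)) := by ring
    _ ≤ _ := by gcongr

lemma tE_summable (p x : ℝ) : Summable fun n => tE p n x := by
  refine summable_of_ratio_norm_eventually_le (r := 1 / 2) (by norm_num) ?_
  filter_upwards [eventually_ge_atTop ⌈2 * (|p| + 1) * x ^ 2⌉₊] with n hn
  have hn' : 2 * (|p| + 1) * x ^ 2 ≤ n := Nat.ceil_le.mp hn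
  have h0 : (0 : ℝ) ≤ n := Nat.cast_nonneg n
  rw [tE_succ, norm_mul, add_assoc p]
  gcongr
  exact ratio_bd _ _ _ _ (by linarith) (by linarith) (by linarith)

lemma tO_summable (p x : ℝ) : Summable fun n => tO p n x := by
  refine summable_of_ratio_norm_eventually_le (r := 1 / 2) (by norm_num) ?_
  filter_upwards [eventually_ge_atTop ⌈2 * (|p| + 1) * x ^ 2⌉₊] with n hn
  have hn' : 2 * (|p| + 1) * x ^ 2 ≤ n := Nat.ceil_le.mp hn
  have h0 : (0 : ℝ) ≤ n := Nat.cast_nonneg n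
  rw [tO_succ, norm_mul, add_assoc p]
  gcongr
  exact ratio_bd _ _ _ _ (by linarith) (by linarith) (by linarith)

noncomputable def sE (p x : ℝ) : ℝ := ∑' n, tE p n x
noncomputable def sO (p x : ℝ) : ℝ := ∑' n, tO p n x

lemma tE_norm_mono (p : ℝ) (n : ℕ) (x R : ℝ) (h : |x| ≤ R) : ‖tE p n x‖ ≤ ‖tE p n R‖ := by
  have hR : |x| ≤ |R| := h.trans (le_abs_self R)
  unfold tE
  simp only [norm_div, norm_mul, norm_pow, Real.norm_eq_abs]
  gcongr

lemma tO_norm_mono (p : ℝ) (n : ℕ) (x R : ℝ) (h : |x| ≤ R) : ‖tO p n x‖ ≤ ‖tO p n R‖ := by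
  have hR : |x| ≤ |R| := h.trans (le_abs_self R)
  unfold tO
  simp only [norm_div, norm_mul, norm_pow, Real.norm_eq_abs]
  gcongr

lemma tO_deriv (p : ℝ) (n : ℕ) (x : ℝ) : HasDerivAt (tO p n) (tE (p + 1) n x) x := by
  unfold tO tE
  have := ((hasDerivAt_pow (2 * n + 1) x).const_mul
    ((-1 : ℝ) ^ n * (∏ k ∈ Finset.range n, (p + 2 * ((k : ℝ) + 1))))).div_const
      (Nat.factorial (2 * n + 1) : ℝ)
  refine this.congr_deriv ?_
  rw [fact_step, show ∏ k ∈ Finset.range n, (p + 1 + 2 * (k : ℝ) + 1)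
    = ∏ k ∈ Finset.range n, (p + 2 * ((k : ℝ) + 1)) from
      Finset.prod_congr rfl (fun k _ => by ring)]
  have h1 : (Nat.factorial (2 * n) : ℝ) ≠ 0 := by positivity
  have h2 : (2 * (n : ℝ) + 1) ≠ 0 := by positivity
  push_cast
  field_simp

lemma tE_prod (p : ℝ) (n : ℕ) : ∏ k ∈ Finset.range (n + 1), (p + 2 * (k : ℝ) + 1) =
    (∏ k ∈ Finset.range n, (p + 1 + 2 * ((k : ℝ) + 1))) * (p + 1) := by
  rw [Finset.prod_range_succ']
  congr 1
  · refine Finset.prod_congr rfl (fun k _ => ?_)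
    push_cast; ring
  · push_cast; ring

lemma tE_deriv (p : ℝ) (n : ℕ) (x : ℝ) :
    HasDerivAt (tE p (n + 1)) (-(p + 1) * tO (p + 1) n x) x := by
  unfold tO tE
  have := ((hasDerivAt_pow (2 * (n + 1)) x).const_mul
    ((-1 : ℝ) ^ (n + 1) * (∏ k ∈ Finset.range (n + 1), (p + 2 * (k : ℝ) + 1)))).div_const
      (Nat.factorial (2 * (n + 1)) : ℝ)
  refine this.congr_deriv ?_
  rw [tE_prod, show 2 * (n + 1) = 2 * n + 1 + 1 by ring, fact_step]
  have h1 : (Nat.factorial (2 * n + 1) : ℝ) ≠ 0 := by positivity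
  have h2 : (2 * (n : ℝ) + 1 + 1) ≠ 0 := by positivity
  push_cast
  field_simp
  ring

lemma sO_deriv (p x : ℝ) : HasDerivAt (sO p) (sE (p + 1) x) x := by
  unfold sO sE
  refine hasDerivAt_tsum_of_isPreconnected (t := Set.Ioo (-(|x| + 1)) (|x| + 1))
    (u := fun n => ‖tE (p + 1) n (|x| + 1)‖) (g := fun n z => tO p n z)
    (g' := fun n z => tE (p + 1) n z) (y₀ := x)
    (tE_summable _ _).norm isOpen_Ioo isPreconnected_Ioo
    (fun n y _ => tO_deriv p n y)
    (fun n y hy => tE_norm_mono _ _ _ _ (abs_le.mpr ⟨hy.1.le, hy.2.le⟩)) ?_ (tO_summable p x) ?_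
  all_goals exact ⟨by linarith [neg_abs_le x], by linarith [le_abs_self x]⟩

lemma sE_split (p : ℝ) : sE p = fun x => 1 + ∑' n, tE p (n + 1) x := by
  funext x
  unfold sE
  rw [(tE_summable p x).tsum_eq_zero_add]
  simp [tE]

lemma sE_deriv (p x : ℝ) : HasDerivAt (sE p) (-(p + 1) * sO (p + 1) x) x := by
  rw [sE_split]
  refine HasDerivAt.const_add _ ?_
  unfold sO
  rw [← tsum_mul_left]
  refine hasDerivAt_tsum_of_isPreconnected (t := Set.Ioo (-(|x| + 1)) (|x| + 1))
    (u := fun n => ‖-(p + 1)‖ * ‖tO (p + 1) n (|x| + 1)‖) (g := fun n z => tE p (n + 1) z)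
    (g' := fun n z => -(p + 1) * tO (p + 1) n z) (y₀ := x)
    ((tO_summable _ _).norm.mul_left _) isOpen_Ioo isPreconnected_Ioo
    (fun n y _ => tE_deriv p n y)
    (fun n y hy => ?_) ?_ ((summable_nat_add_iff 1).mpr (tE_summable p x)) ?_
  · rw [norm_mul]
    gcongr
    exact tO_norm_mono _ _ _ _ (abs_le.mpr ⟨hy.1.le, hy.2.le⟩)
  all_goals exact ⟨by linarith [neg_abs_le x], by linarith [le_abs_self x]⟩

lemma sE_rel (p x : ℝ) : sE p x = sE (p + 1 + 1) x + x * sO (p + 1) x := by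
  rw [sE_split, sE_split]
  unfold sO
  beta_reduce
  rw [← tsum_mul_left, add_assoc, ← Summable.tsum_add
    ((summable_nat_add_iff 1).mpr (tE_summable _ x)) ((tO_summable _ x).mul_left x)]
  congr 1
  refine tsum_congr (fun n => ?_)
  unfold tE tO
  rw [tE_prod, Finset.prod_range_succ, show ∏ k ∈ Finset.range n, (p + 1 + 1 + 2 * (k : ℝ) + 1)
    = ∏ k ∈ Finset.range n, (p + 1 + 2 * ((k : ℝ) + 1)) from
      Finset.prod_congr rfl (fun k _ => by ring), show 2 * (n + 1) = 2 * n + 1 + 1 by ring,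
      fact_step]
  have h1 : (Nat.factorial (2 * n + 1) : ℝ) ≠ 0 := by positivity
  have h2 : (2 * (n : ℝ) + 1 + 1) ≠ 0 := by positivity
  push_cast
  field_simp
  ring

lemma sO_rel (p x : ℝ) : (p + 1 + 1) * sO (p + 1 + 1) x = x * sE (p + 1) x + (p + 1) * sO p x := by
  unfold sO sE
  rw [← tsum_mul_left, ← tsum_mul_left, ← tsum_mul_left, ← Summable.tsum_add
    ((tE_summable _ x).mul_left x) ((tO_summable _ x).mul_left _)]
  refine tsum_congr (fun n => ?_)
  unfold tE tO
  have e2 : ∏ k ∈ Finset.range n, (p + 1 + 2 * (k : ℝ) + 1)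
    = ∏ k ∈ Finset.range n, (p + 2 * ((k : ℝ) + 1)) :=
      Finset.prod_congr rfl (fun k _ => by ring)
  have e1 : (p + 1 + 1) * ∏ k ∈ Finset.range n, (p + 1 + 1 + 2 * ((k : ℝ) + 1))
    = (p + 2 * n + 2) * ∏ k ∈ Finset.range n, (p + 2 * ((k : ℝ) + 1)) := by
    rw [← e2]
    have := tE_prod (p + 1) n
    rw [Finset.prod_range_succ] at this
    linear_combination -this
  rw [e2, fact_step]
  have h1 : (Nat.factorial (2 * n) : ℝ) ≠ 0 := by positivity
  have h2 : (2 * (n : ℝ) + 1) ≠ 0 := by positivity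
  push_cast
  field_simp
  linear_combination x * x ^ (2 * n) * e1

lemma zero_of_nonneg (b p : ℝ) (g g' g'' : ℝ → ℝ) (hb : 0 ≤ b)
    (hd1 : ∀ x, HasDerivAt g (g' x) x) (hd2 : ∀ x, HasDerivAt g' (g'' x) x)
    (hode : ∀ x, g'' x + b * x * g' x + b * p * g x = 0) (h0 : g 0 = 0) (h0' : g' 0 = 0)
    (x : ℝ) (hx : 0 ≤ x) : g x = 0 := by
  set K := |1 - b * p| with hK
  have hder : ∀ y, HasDerivAt (fun y => Real.exp (-K * y) * (g y ^ 2 + g' y ^ 2))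
      (Real.exp (-K * y) * (-K * (g y ^ 2 + g' y ^ 2) + 2 * g y * g' y + 2 * g' y * g'' y)) y := by
    intro y
    have e := ((hasDerivAt_id y).const_mul (-K)).exp
    have := e.mul (((hd1 y).pow 2).add ((hd2 y).pow 2))
    refine this.congr_deriv ?_
    simp
    ring
  have hanti := antitoneOn_of_deriv_nonpos (convex_Ici (0 : ℝ))
    (f := fun y => Real.exp (-K * y) * (g y ^ 2 + g' y ^ 2))
    (fun y _ => (hder y).continuousAt.continuousWithinAt)
    (fun y _ => (hder y).differentiableAt.differentiableWithinAt)
    (fun y hy => by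
      rw [interior_Ici] at hy
      have hy : 0 < y := hy
      rw [(hder y).deriv]
      refine mul_nonpos_of_nonneg_of_nonpos (Real.exp_pos _).le ?_
      have e : g'' y = -(b * y * g' y) - b * p * g y := by linarith [hode y]
      rw [e]
      have h1 : 0 ≤ b * y * g' y ^ 2 := by positivity
      have h2 : (1 - b * p) * (2 * g y * g' y) ≤ K * (g y ^ 2 + g' y ^ 2) := by
        calc _ ≤ |(1 - b * p) * (2 * g y * g' y)| := le_abs_self _
          _ = K * |2 * g y * g' y| := by rw [abs_mul]
          _ ≤ _ := by
            gcongr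
            exact abs_le.mpr ⟨by nlinarith [sq_nonneg (g y + g' y)],
              by nlinarith [sq_nonneg (g y - g' y)]⟩
      nlinarith)
  have h1 := hanti (Set.mem_Ici.mpr le_rfl) (Set.mem_Ici.mpr hx) hx
  simp only [h0, h0'] at h1
  have h2 : g x ^ 2 + g' x ^ 2 ≤ 0 := by
    by_contra! hc
    have := mul_pos (Real.exp_pos (-K * x)) hc
    norm_num at h1
    norm_num at this
    linarith
  nlinarith [sq_nonneg (g x), sq_nonneg (g' x)]

lemma zero_all (b p : ℝ) (g g' g'' : ℝ → ℝ) (hb : 0 ≤ b)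
    (hd1 : ∀ x, HasDerivAt g (g' x) x) (hd2 : ∀ x, HasDerivAt g' (g'' x) x)
    (hode : ∀ x, g'' x + b * x * g' x + b * p * g x = 0) (h0 : g 0 = 0) (h0' : g' 0 = 0)
    (x : ℝ) : g x = 0 := by
  rcases le_total 0 x with hx | hx
  · exact zero_of_nonneg b p g g' g'' hb hd1 hd2 hode h0 h0' x hx
  · have := zero_of_nonneg b p (fun y => g (-y)) (fun y => -g' (-y)) (fun y => g'' (-y)) hb
      (fun y => by
        have := (hd1 (-y)).comp y (hasDerivAt_neg y)
        refine this.congr_deriv ?_; ring)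
      (fun y => by
        have := ((hd2 (-y)).comp y (hasDerivAt_neg y)).neg
        refine this.congr_deriv ?_; ring)
      (fun y => by linear_combination hode (-y)) (by simpa using h0) (by simpa using h0') (-x)
      (by linarith)
    simpa using this

lemma main_eq (a p : ℝ) (ha : a ≠ 0) (h h' h'' : ℝ → ℝ)
    (hd1 : ∀ x, HasDerivAt h (h' x) x) (hd2 : ∀ x, HasDerivAt h' (h'' x) x)
    (hode : ∀ x, h'' x + a ^ 2 * x * h' x + a ^ 2 * p * h x = 0) (x : ℝ) :
    h x = h 0 * sE (p - 1) (a * x) + h' 0 / a * sO (p - 1) (a * x) := by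
  obtain ⟨q, rfl⟩ : ∃ q, p = q + 1 := ⟨p - 1, by ring⟩
  rw [add_sub_cancel_right]
  have hE : ∀ r y, HasDerivAt (fun y => sE r (a * y)) (-(r + 1) * sO (r + 1) (a * y) * a) y := by
    intro r y
    have := (sE_deriv r (a * y)).comp y ((hasDerivAt_id y).const_mul a)
    refine this.congr_deriv ?_; simp
  have hO : ∀ r y, HasDerivAt (fun y => sO r (a * y)) (sE (r + 1) (a * y) * a) y := by
    intro r y
    have := (sO_deriv r (a * y)).comp y ((hasDerivAt_id y).const_mul a)
    refine this.congr_deriv ?_; simp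
  have sE0 : ∀ r, sE r 0 = 1 := by
    intro r; rw [sE_split]; simp [tE]
  have sO0 : ∀ r, sO r 0 = 0 := by
    intro r; simp [sO, tO]
  have := zero_all (a ^ 2) (q + 1)
    (fun y => h y - (h 0 * sE q (a * y) + h' 0 / a * sO q (a * y)))
    (fun y => h' y - (h 0 * (-(q + 1) * a) * sO (q + 1) (a * y) + h' 0 * sE (q + 1) (a * y)))
    (fun y => h'' y - (h 0 * (-(q + 1) * a) * (sE (q + 1 + 1) (a * y) * a)
      + h' 0 * (-(q + 1 + 1) * sO (q + 1 + 1) (a * y) * a)))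
    (by positivity)
    (fun y => by
      have := (hd1 y).sub (((hE q y).const_mul (h 0)).add ((hO q y).const_mul (h' 0 / a)))
      refine this.congr_deriv ?_
      field_simp)
    (fun y => (hd2 y).sub (((hO (q + 1) y).const_mul (h 0 * (-(q + 1) * a))).add
      ((hE (q + 1) y).const_mul (h' 0))))
    (fun y => by
      have e1 := sE_rel q (a * y)
      have e2 := sO_rel q (a * y)
      have e3 : a ^ 2 * (q + 1) * (h' 0 / a * sO q (a * y)) = a * (q + 1) * h' 0 * sO q (a * y) := by
        field_simp
      linear_combination hode y - e3 - h 0 * (q + 1) * a ^ 2 * e1 + h' 0 * a * e2)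
    (by simp [sE0, sO0]) (by simp [sE0, sO0]) x
  linarith

/-- Solutions of `h'' + a²x h' + a²p h = 0` are `√(2π)h(0) Λ^e_{p-1}(ax) + (√(2π)h'(0)/a) Λ^o_{p-1}(ax)`;
in particular even solutions are multiples of `Λ^e_{p-1}(ax)` and odd solutions are multiples of
`Λ^o_{p-1}(ax)`. -/
theorem stmt_6 (a p : ℝ) (ha : a ≠ 0) (h h' h'' : ℝ → ℝ)
    (hd1 : ∀ x, HasDerivAt h (h' x) x) (hd2 : ∀ x, HasDerivAt h' (h'' x) x)
    (hode : ∀ x, h'' x + a ^ 2 * x * h' x + a ^ 2 * p * h x = 0) :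
    (∀ x, h x = Real.sqrt (2 * Real.pi) * h 0 * LamE (p - 1) (a * x) +
      (Real.sqrt (2 * Real.pi) * h' 0 / a) * LamO (p - 1) (a * x)) ∧
    ((∀ x, h (-x) = h x) →
      ∀ x, h x = Real.sqrt (2 * Real.pi) * h 0 * LamE (p - 1) (a * x)) ∧
    ((∀ x, h (-x) = -h x) →
      ∀ x, h x = (Real.sqrt (2 * Real.pi) * h' 0 / a) * LamO (p - 1) (a * x)) := by
  have hs : Real.sqrt (2 * Real.pi) ≠ 0 := by positivity
  have lE : ∀ q x, LamE q x = 1 / Real.sqrt (2 * Real.pi) * sE q x := fun q x => rfl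
  have lO : ∀ q x, LamO q x = 1 / Real.sqrt (2 * Real.pi) * sO q x := fun q x => rfl
  have key : ∀ x, h x = Real.sqrt (2 * Real.pi) * h 0 * LamE (p - 1) (a * x) +
      (Real.sqrt (2 * Real.pi) * h' 0 / a) * LamO (p - 1) (a * x) := by
    intro x
    rw [lE, lO]
    have := main_eq a p ha h h' h'' hd1 hd2 hode x
    rw [this]
    field_simp
  refine ⟨key, fun he x => ?_, fun ho x => ?_⟩
  · have h0 : h' 0 = 0 := by
      have h1 := hd1 (-0)
      have h2 := h1.comp (0 : ℝ) (hasDerivAt_neg (0 : ℝ))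
      have h3 : h ∘ Neg.neg = h := funext he
      have h4 : HasDerivAt h (h' (-0) * -1) 0 := by
        rw [← h3]; exact h2
      have h5 := h4.unique (hd1 0)
      rw [neg_zero] at h5
      linarith
    have := key x
    rw [h0] at this
    simpa using this
  · have h0 : h 0 = 0 := by
      have := ho 0
      rw [neg_zero] at this
      linarith
    have := key x
    rw [h0] at this
    simpa using this
end

section
/- For every real p > 0 there exist nonzero real constants c and d such that for all real ω: ∫_ℝ Λ^e_p(x) e^{-iωx} dx = c |ω|^p e^{-ω²/2} and ∫_ℝ Λ^o_p(x) e^{-iωx} dx = i · d · sign(ω) |ω|^p e^{-ω²/2}. Moreover, ∫_ℝ Λ^e_0(x) e^{-iωx} dx = e^{-ω²/2} for all real ω. -/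
open MeasureTheory Filter Real

noncomputable def wt (s t : ℝ) : ℝ := t ^ s * Real.exp (-(1/2) * t ^ 2)

lemma wt_integrableOn {s : ℝ} (hs : -1 < s) : IntegrableOn (wt s) (Set.Ioi 0) :=
  integrableOn_rpow_mul_exp_neg_mul_sq (by norm_num) hs

lemma wt_tendsto (s : ℝ) : Tendsto (wt s) atTop (nhds 0) := by
  have h := rpow_mul_exp_neg_mul_sq_isLittleO_exp_neg (b := 1/2) (by norm_num) s
  refine h.trans_tendsto ?_
  refine Real.tendsto_exp_atBot.comp ?_
  exact tendsto_id.const_mul_atTop_of_neg (by norm_num)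

lemma wt_hasDerivAt (s : ℝ) {t : ℝ} (ht : 0 < t) :
    HasDerivAt (wt s) (s * wt (s - 1) t - wt (s + 1) t) t := by
  have h1 := Real.hasDerivAt_rpow_const (x := t) (p := s) (Or.inl ht.ne')
  have h2 : HasDerivAt (fun t : ℝ => Real.exp (-(1/2) * t ^ 2))
      (Real.exp (-(1/2) * t ^ 2) * (-(1/2) * (2 * t))) t := by
    have := ((hasDerivAt_pow 2 t).const_mul (-(1/2 : ℝ))).exp
    simpa using this
  refine (h1.mul h2).congr_deriv ?_
  rw [wt, wt, Real.rpow_add_one ht.ne']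
  ring

lemma wt_bound {s r : ℝ} (h : r ≤ s) : ∃ C : ℝ, 0 ≤ C ∧ ∀ t : ℝ, 0 < t → wt s t ≤ C * t ^ r := by
  rcases h.eq_or_lt with rfl | h
  · refine ⟨1, zero_le_one, fun t ht => ?_⟩
    rw [wt, mul_comm]
    gcongr
    rw [Real.exp_le_one_iff]
    nlinarith [sq_nonneg t]
  · set k := s - r with hk
    have hk0 : 0 < k := by linarith
    refine ⟨k ^ (k / 2), by positivity, fun t ht => ?_⟩
    have h1 : t ^ 2 / k ≤ Real.exp (t ^ 2 / k) := by
      linarith [Real.add_one_le_exp (t ^ 2 / k)]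
    have h2 := Real.rpow_le_rpow (by positivity) h1 (by positivity : (0:ℝ) ≤ k / 2)
    rw [← Real.exp_mul, Real.div_rpow (by positivity) hk0.le, div_le_iff₀ (by positivity),
      ← Real.rpow_natCast, ← Real.rpow_mul ht.le, Real.rpow_natCast] at h2
    have e1 : t ^ 2 / k * (k / 2) = (1/2) * t ^ 2 := by field_simp
    have e2 : ((2 : ℕ) : ℝ) * (k / 2) = k := by push_cast; ring
    rw [e1, e2] at h2
    have e3 : t ^ s = t ^ k * t ^ r := by rw [← Real.rpow_add ht]; congr 1; simp [hk]
    rw [wt, e3]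
    have e4 : Real.exp ((1/2) * t ^ 2) * Real.exp (-(1/2) * t ^ 2) = 1 := by
      rw [← Real.exp_add]; simp
    calc t ^ k * t ^ r * Real.exp (-(1/2) * t ^ 2)
        ≤ (Real.exp ((1/2) * t ^ 2) * k ^ (k/2)) * t ^ r * Real.exp (-(1/2) * t ^ 2) := by gcongr
      _ = (Real.exp ((1/2) * t ^ 2) * Real.exp (-(1/2) * t ^ 2)) * (k ^ (k/2) * t ^ r) := by ring
      _ = _ := by rw [e4, one_mul]

lemma wt_nonneg (s : ℝ) {t : ℝ} (ht : 0 < t) : 0 ≤ wt s t := by unfold wt; positivity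

lemma norm_e (x t : ℝ) : ‖Complex.exp (Complex.I * x * t)‖ = 1 := by
  rw [show Complex.I * x * t = ((x * t : ℝ) : ℂ) * Complex.I by push_cast; ring]
  exact Complex.norm_exp_ofReal_mul_I _

lemma integrableOn_mul_e {u : ℝ → ℝ} {S : Set ℝ} (hu : IntegrableOn u S) (x : ℝ) :
    IntegrableOn (fun t => (u t : ℂ) * Complex.exp (Complex.I * x * t)) S := by
  have h := hu.ofReal (𝕜 := ℂ)
  refine h.mul_bdd (c := 1) ?_ ?_
  · exact Continuous.aestronglyMeasurable (by fun_prop)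
  · exact Eventually.of_forall fun t => (norm_e x t).le

lemma ibp {u u' : ℝ → ℝ} {a A x : ℝ} (hx : x ≠ 0)
    (hd : ∀ t ∈ Set.Ioi a, HasDerivAt u (u' t) t)
    (hu : IntegrableOn u (Set.Ioi a)) (hu' : IntegrableOn u' (Set.Ioi a))
    (hA : Tendsto u (nhdsWithin a (Set.Ioi a)) (nhds A)) (hB : Tendsto u atTop (nhds 0)) :
    ‖∫ t in Set.Ioi a, (u t : ℂ) * Complex.exp (Complex.I * x * t)‖ ≤
      (|A| + ‖∫ t in Set.Ioi a, (u' t : ℂ) * Complex.exp (Complex.I * x * t)‖) / |x| := by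
  have hx' : (x : ℂ) ≠ 0 := by exact_mod_cast hx
  set v : ℝ → ℂ := fun t => Complex.exp (Complex.I * x * t) / (Complex.I * x) with hv
  have hnv : ∀ t, ‖v t‖ = 1 / |x| := by
    intro t; rw [hv]; simp only [norm_div, norm_e]; simp
  have hvd : ∀ t : ℝ, HasDerivAt v (Complex.exp (Complex.I * x * t)) t := by
    intro t
    have h1 : HasDerivAt (fun t : ℝ => Complex.I * x * (t : ℂ)) (Complex.I * x) t := by
      simpa using (Complex.ofRealCLM.hasDerivAt (x := t)).const_mul (Complex.I * (x : ℂ))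
    have := h1.cexp.div_const (Complex.I * (x : ℂ))
    refine this.congr_deriv ?_
    field_simp
  have hud : ∀ t ∈ Set.Ioi a, HasDerivAt (fun t => (u t : ℂ)) ((u' t : ℂ)) t :=
    fun t ht => (hd t ht).ofReal_comp
  have hvc : Continuous v := by rw [hv]; fun_prop
  have hu'v : IntegrableOn ((fun t => (u' t : ℂ)) * v) (Set.Ioi a) := by
    have := (integrableOn_mul_e hu' x).div_const (Complex.I * (x : ℂ))
    refine this.congr (Eventually.of_forall fun t => ?_)
    simp [hv, mul_div_assoc]
  have key := integral_Ioi_mul_deriv_eq_deriv_mul (a := a) (a' := (A : ℂ) * v a) (b' := 0)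
    (u := fun t => (u t : ℂ)) (v := v) (u' := fun t => (u' t : ℂ))
    (v' := fun t => Complex.exp (Complex.I * x * t)) hud (fun t _ => hvd t)
    (integrableOn_mul_e hu x) hu'v ?_ ?_
  · rw [key]
    have e : ∫ t in Set.Ioi a, (u' t : ℂ) * v t =
        (∫ t in Set.Ioi a, (u' t : ℂ) * Complex.exp (Complex.I * x * t)) / (Complex.I * x) := by
      rw [← integral_div]
      congr 1; ext t; simp [hv, mul_div_assoc]
    rw [e]
    refine (norm_sub_le _ _).trans ?_
    rw [add_div]
    gcongr
    · simp [hnv, div_eq_mul_inv]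
    · simp [div_eq_mul_inv]
  · exact ((Complex.continuous_ofReal.tendsto _).comp hA).mul
      (hvc.continuousAt.tendsto.mono_left nhdsWithin_le_nhds)
  · rw [tendsto_zero_iff_norm_tendsto_zero]
    have : Tendsto (fun t => |u t| * (1 / |x|)) atTop (nhds (|0| * (1 / |x|))) :=
      (hB.abs).mul_const _
    simp only [abs_zero, zero_mul] at this
    refine this.congr fun t => ?_
    simp [hnv]

noncomputable def FF (p x : ℝ) : ℂ :=
  ∫ t in Set.Ioi (0:ℝ), (wt p t : ℂ) * Complex.exp (Complex.I * x * t)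

lemma wt_continuous {p : ℝ} (hp : 0 ≤ p) : Continuous (wt p) := by
  unfold wt
  exact (Real.continuous_rpow_const hp).mul (by fun_prop)

lemma FF_decay {p : ℝ} (hp : 0 < p) : ∃ q D : ℝ, 0 < q ∧ 0 ≤ D ∧
    ∀ x : ℝ, x ≠ 0 → ‖FF p x‖ ≤ D * |x| ^ (-(1 + q)) := by
  set q : ℝ := min p (1/2) with hq
  have hq0 : 0 < q := by simp [hq, hp]
  have hq1 : q < 1 := (min_le_right _ _).trans_lt (by norm_num)
  have hqp : q ≤ p := min_le_left _ _
  set g1 : ℝ → ℝ := fun t => p * wt (p - 1) t - wt (p + 1) t with hg1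
  set g2 : ℝ → ℝ := fun t => p * ((p - 1) * wt (p - 1 - 1) t - wt (p - 1 + 1) t) -
    ((p + 1) * wt (p + 1 - 1) t - wt (p + 1 + 1) t) with hg2
  have hd1 : ∀ t : ℝ, 0 < t → HasDerivAt (wt p) (g1 t) t := fun t ht => wt_hasDerivAt p ht
  have hd2 : ∀ t : ℝ, 0 < t → HasDerivAt g1 (g2 t) t := fun t ht =>
    ((wt_hasDerivAt (p-1) ht).const_mul p).sub (wt_hasDerivAt (p+1) ht)
  have hb1 : ∃ C : ℝ, 0 ≤ C ∧ ∀ t : ℝ, 0 < t → |g1 t| ≤ C * t ^ (q - 1) := by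
    obtain ⟨A, hA, hA'⟩ := wt_bound (s := p - 1) (r := q - 1) (by linarith)
    obtain ⟨B, hB, hB'⟩ := wt_bound (s := p + 1) (r := q - 1) (by linarith)
    refine ⟨p * A + B, by positivity, fun t ht => ?_⟩
    have h1 := hA' t ht
    have h2 := hB' t ht
    have h3 := wt_nonneg (p - 1) ht
    have h4 := wt_nonneg (p + 1) ht
    have h5 := mul_le_mul_of_nonneg_left h1 hp.le
    have h6 := mul_nonneg hp.le h3
    rw [hg1, abs_le]
    constructor <;> dsimp only <;> nlinarith
  have hb2 : ∃ C : ℝ, 0 ≤ C ∧ ∀ t : ℝ, 0 < t → |g2 t| ≤ C * t ^ (q - 2) := by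
    obtain ⟨A1, hA1, hA1'⟩ := wt_bound (s := p - 1 - 1) (r := q - 2) (by linarith)
    obtain ⟨A2, hA2, hA2'⟩ := wt_bound (s := p - 1 + 1) (r := q - 2) (by linarith)
    obtain ⟨A3, hA3, hA3'⟩ := wt_bound (s := p + 1 - 1) (r := q - 2) (by linarith)
    obtain ⟨A4, hA4, hA4'⟩ := wt_bound (s := p + 1 + 1) (r := q - 2) (by linarith)
    refine ⟨p * (|p - 1| * A1 + A2) + ((p+1) * A3 + A4), by positivity, fun t ht => ?_⟩
    have n1 := wt_nonneg (p - 1 - 1) ht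
    have n2 := wt_nonneg (p - 1 + 1) ht
    have n3 := wt_nonneg (p + 1 - 1) ht
    have n4 := wt_nonneg (p + 1 + 1) ht
    calc |g2 t| ≤ |p * ((p - 1) * wt (p - 1 - 1) t - wt (p - 1 + 1) t)| +
          |(p + 1) * wt (p + 1 - 1) t - wt (p + 1 + 1) t| := abs_sub _ _
      _ ≤ p * (|p - 1| * wt (p - 1 - 1) t + wt (p - 1 + 1) t) +
          ((p + 1) * wt (p + 1 - 1) t + wt (p + 1 + 1) t) := by
        rw [abs_mul, abs_of_pos hp]
        gcongr
        · refine (abs_sub _ _).trans ?_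
          rw [abs_mul, abs_of_nonneg n1, abs_of_nonneg n2]
        · refine (abs_sub _ _).trans ?_
          rw [abs_mul, abs_of_nonneg n3, abs_of_nonneg n4, abs_of_pos (by linarith : 0 < p + 1)]
      _ ≤ p * (|p - 1| * (A1 * t ^ (q - 2)) + A2 * t ^ (q - 2)) +
          ((p + 1) * (A3 * t ^ (q - 2)) + A4 * t ^ (q - 2)) := by
        gcongr
        · exact hA1' t ht
        · exact hA2' t ht
        · exact hA3' t ht
        · exact hA4' t ht
      _ = _ := by ring
  obtain ⟨C1, hC1, hC1'⟩ := hb1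
  obtain ⟨C2, hC2, hC2'⟩ := hb2
  have hg1i : IntegrableOn g1 (Set.Ioi 0) :=
    ((wt_integrableOn (by linarith : -1 < p - 1)).const_mul p).sub
      (wt_integrableOn (by linarith : -1 < p + 1))
  have hg1t : Tendsto g1 atTop (nhds 0) := by
    simpa using ((wt_tendsto (p-1)).const_mul p).sub (wt_tendsto (p+1))
  refine ⟨q, C1 / q + (C1 + C2 / (1 - q)), hq0, ?_, fun x hx => ?_⟩
  · have : 0 < 1 - q := by linarith
    positivity
  have hx0 : 0 < |x| := abs_pos.mpr hx
  set a : ℝ := 1 / |x| with ha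
  have ha0 : 0 < a := by positivity
  have s1 := ibp (u := wt p) (u' := g1) (a := 0) (A := 0) hx hd1
    (wt_integrableOn (by linarith)) hg1i ?_ (wt_tendsto p)
  swap
  · have := (wt_continuous hp.le).tendsto 0
    rw [show wt p 0 = 0 by simp [wt, hp.ne']] at this
    exact this.mono_left nhdsWithin_le_nhds
  have hsub : Set.Ioi a ⊆ Set.Ioi 0 := Set.Ioi_subset_Ioi ha0.le
  have hg2i : IntegrableOn g2 (Set.Ioi a) := by
    refine Integrable.mono' ((integrableOn_Ioi_rpow_of_lt (by linarith : q - 2 < -1) ha0).const_mul C2)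
      ?_ ?_
    · refine Measurable.aestronglyMeasurable ?_
      rw [hg2]; unfold wt; fun_prop
    · refine (ae_restrict_iff' measurableSet_Ioi).2 (Eventually.of_forall fun t ht => ?_)
      exact hC2' t (hsub ht)
  have s2 := ibp (u := g1) (u' := g2) (a := a) (A := g1 a) hx (fun t ht => hd2 t (hsub ht))
    (hg1i.mono_set hsub) hg2i
    ((hd2 a ha0).continuousAt.tendsto.mono_left nhdsWithin_le_nhds) hg1t
  have s3 : ‖∫ t in Set.Ioi a, (g2 t : ℂ) * Complex.exp (Complex.I * x * t)‖ ≤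
      C2 * (a ^ (q - 1) / (1 - q)) := by
    have h := norm_integral_le_of_norm_le (μ := volume.restrict (Set.Ioi a))
      (f := fun t => (g2 t : ℂ) * Complex.exp (Complex.I * x * t))
      ((integrableOn_Ioi_rpow_of_lt (by linarith : q - 2 < -1) ha0).const_mul C2) ?_
    · rw [integral_const_mul, integral_Ioi_rpow_of_lt (by linarith) ha0] at h
      convert h using 2
      rw [show q - 2 + 1 = q - 1 by ring, show q - 1 = -(1 - q) by ring, neg_div_neg_eq]
    · refine (ae_restrict_iff' measurableSet_Ioi).2 (Eventually.of_forall fun t ht => ?_)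
      rw [norm_mul, norm_e, mul_one, Complex.norm_real]
      exact hC2' t (hsub ht)
  have s4 : ‖∫ t in Set.Ioc 0 a, (g1 t : ℂ) * Complex.exp (Complex.I * x * t)‖ ≤
      C1 * (a ^ q / q) := by
    have hi : IntegrableOn (fun t : ℝ => t ^ (q - 1)) (Set.Ioc 0 a) :=
      (intervalIntegrable_iff_integrableOn_Ioc_of_le ha0.le).1
        (intervalIntegral.intervalIntegrable_rpow' (by linarith))
    have h := norm_integral_le_of_norm_le (μ := volume.restrict (Set.Ioc 0 a))
      (f := fun t => (g1 t : ℂ) * Complex.exp (Complex.I * x * t)) (hi.const_mul C1) ?_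
    · rw [integral_const_mul, ← intervalIntegral.integral_of_le (f := fun t : ℝ => t ^ (q - 1)) ha0.le,
        integral_rpow (Or.inl (by linarith))] at h
      simpa [hq0.ne'] using h
    · refine (ae_restrict_iff' measurableSet_Ioc).2 (Eventually.of_forall fun t ht => ?_)
      rw [norm_mul, norm_e, mul_one, Complex.norm_real]
      exact hC1' t ht.1
  have s5 : ∫ t in Set.Ioi 0, (g1 t : ℂ) * Complex.exp (Complex.I * x * t) =
      (∫ t in Set.Ioc 0 a, (g1 t : ℂ) * Complex.exp (Complex.I * x * t)) +
      ∫ t in Set.Ioi a, (g1 t : ℂ) * Complex.exp (Complex.I * x * t) := by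
    rw [← setIntegral_union (Set.Ioc_disjoint_Ioi le_rfl) measurableSet_Ioi, Set.Ioc_union_Ioi_eq_Ioi ha0.le]
    · exact integrableOn_mul_e (hg1i.mono_set Set.Ioc_subset_Ioi_self) x
    · exact integrableOn_mul_e (hg1i.mono_set hsub) x
  have s6 := hC1' a ha0
  have haq : a ^ (q - 1) * a = a ^ q := by
    rw [← Real.rpow_add_one ha0.ne']; congr 1; ring
  have hfin : |x| ^ (-(1 + q)) = a ^ q * a := by
    rw [Real.rpow_neg hx0.le, ← Real.inv_rpow hx0.le, ← one_div, ← ha, add_comm,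
      Real.rpow_add_one ha0.ne']
  have hdiv : ∀ y : ℝ, y / |x| = y * a := fun y => by rw [ha]; ring
  rw [hdiv, abs_zero, zero_add] at s1
  rw [hdiv] at s2
  have s7 : ‖∫ t in Set.Ioi 0, (g1 t : ℂ) * Complex.exp (Complex.I * x * t)‖ ≤
      C1 * (a ^ q / q) + (C1 * a ^ (q - 1) + C2 * (a ^ (q - 1) / (1 - q))) * a := by
    rw [s5]
    refine (norm_add_le _ _).trans (add_le_add s4 (s2.trans ?_))
    gcongr
  calc ‖FF p x‖ ≤ _ := s1
    _ ≤ (C1 * (a ^ q / q) + (C1 * a ^ (q - 1) + C2 * (a ^ (q - 1) / (1 - q))) * a) * a := by gcongr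
    _ = (C1 / q + (C1 + C2 / (1 - q))) * (a ^ q * a) := by rw [← haq]; ring
    _ = _ := by rw [hfin]

lemma FF_integrable {p : ℝ} (hp : 0 < p) : Integrable (FF p) := by
  have hi := wt_integrableOn (by linarith : -1 < p)
  have hcont : Continuous (FF p) := by
    unfold FF
    refine continuous_of_dominated (bound := fun t => ‖wt p t‖)
      (fun x => (integrableOn_mul_e hi x).aestronglyMeasurable) (fun x => ?_) hi.norm ?_
    · refine Eventually.of_forall fun t => ?_
      rw [norm_mul, norm_e, mul_one, Complex.norm_real]
    · exact Eventually.of_forall fun t => by fun_prop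
  obtain ⟨q, D, hq, hD, hb⟩ := FF_decay hp
  have hbdd : ∃ M : ℝ, 0 ≤ M ∧ ∀ x, ‖FF p x‖ ≤ M := by
    refine ⟨∫ t in Set.Ioi 0, ‖wt p t‖, by positivity, fun x => ?_⟩
    refine norm_integral_le_of_norm_le hi.norm (Eventually.of_forall fun t => ?_)
    rw [norm_mul, norm_e, mul_one, Complex.norm_real]
  obtain ⟨M, hM, hM'⟩ := hbdd
  have hj : Integrable (fun x : ℝ => (1 + ‖x‖) ^ (-(1 + q))) :=
    integrable_one_add_norm (by simp [hq])
  refine Integrable.mono' (hj.const_mul ((M + D) * 2 ^ (1 + q))) hcont.aestronglyMeasurable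
    (Eventually.of_forall fun x => ?_)
  rw [Real.norm_eq_abs]
  have key : ∀ y : ℝ, 0 < y → (1 + |x|) ≤ 2 * y → y ^ (-(1 + q)) ≤ 2 ^ (1 + q) * (1 + |x|) ^ (-(1 + q)) := by
    intro y hy h
    have h1 : (2 * y) ^ (-(1+q)) ≤ (1 + |x|) ^ (-(1+q)) :=
      Real.rpow_le_rpow_of_nonpos (by positivity) h (by linarith)
    rw [Real.mul_rpow (by norm_num) hy.le, Real.rpow_neg (by norm_num : (0:ℝ) ≤ 2)] at h1
    have h2 : (0:ℝ) < 2 ^ (1 + q) := by positivity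
    rwa [inv_mul_le_iff₀ h2] at h1
  rcases le_total |x| 1 with h | h
  · have := key 1 one_pos (by linarith)
    rw [Real.one_rpow] at this
    calc ‖FF p x‖ ≤ (M + D) * 1 := by linarith [hM' x]
      _ ≤ (M + D) * (2 ^ (1 + q) * (1 + |x|) ^ (-(1 + q))) := by gcongr
      _ = _ := by ring
  · have := key |x| (by linarith) (by linarith)
    calc ‖FF p x‖ ≤ D * |x| ^ (-(1 + q)) := hb x (by rintro rfl; norm_num at h)
      _ ≤ (M + D) * |x| ^ (-(1 + q)) := by gcongr; linarith
      _ ≤ (M + D) * (2 ^ (1 + q) * (1 + |x|) ^ (-(1 + q))) := by gcongr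
      _ = _ := by ring

lemma wt_add_nat (s : ℝ) (n : ℕ) {t : ℝ} (ht : 0 < t) : wt (s + n) t = t ^ n * wt s t := by
  rw [wt, wt, Real.rpow_add ht, Real.rpow_natCast]; ring

noncomputable def MM (s : ℝ) : ℝ := ∫ t in Set.Ioi (0:ℝ), wt s t

lemma MM_eq {s : ℝ} (hs : -1 < s) :
    MM s = (1/2) ^ (-(s + 1) / 2) * (1 / 2) * Real.Gamma ((s + 1) / 2) := by
  have := integral_rpow_mul_exp_neg_mul_rpow (p := 2) (q := s) (b := 1/2) two_pos hs (by norm_num)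
  rw [← this, MM]
  simp only [wt, Real.rpow_two]

lemma MM_pos {s : ℝ} (hs : -1 < s) : 0 < MM s := by
  rw [MM_eq hs]
  have := Real.Gamma_pos_of_pos (by linarith : 0 < (s + 1) / 2)
  positivity

lemma MM_succ {s : ℝ} (hs : -1 < s) : MM (s + 2) = (s + 1) * MM s := by
  rw [MM_eq hs, MM_eq (by linarith), show (s + 2 + 1) / 2 = (s + 1) / 2 + 1 by ring,
    Real.Gamma_add_one (by linarith), show -(s + 2 + 1) / 2 = -(s + 1) / 2 - 1 by ring,
    Real.rpow_sub_one (by norm_num)]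
  ring

lemma MM_prod {s : ℝ} (hs : -1 < s) (n : ℕ) :
    MM (s + (2 * n : ℕ)) = (∏ k ∈ Finset.range n, (s + 2 * (k : ℝ) + 1)) * MM s := by
  induction n with
  | zero => simp
  | succ n ih =>
    have h : (0:ℝ) ≤ n := n.cast_nonneg
    rw [show s + ((2 * (n + 1) : ℕ) : ℝ) = (s + (2 * n : ℕ)) + 2 by push_cast; ring,
      MM_succ (by push_cast; linarith), ih, Finset.prod_range_succ]
    push_cast; ring

lemma wt_exp_integrable {p : ℝ} (hp : -1 < p) (x : ℝ) :
    IntegrableOn (fun t => wt p t * Real.exp |x * t|) (Set.Ioi 0) := by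
  have h := (integrableOn_rpow_mul_exp_neg_mul_sq (b := 1/4) (by norm_num) hp).const_mul
    (Real.exp (x ^ 2))
  refine Integrable.mono' h ?_ ?_
  · refine Measurable.aestronglyMeasurable ?_
    unfold wt; fun_prop
  · refine (ae_restrict_iff' measurableSet_Ioi).2 (Eventually.of_forall fun t ht => ?_)
    have ht : 0 < t := ht
    rw [Real.norm_of_nonneg (mul_nonneg (wt_nonneg p ht) (by positivity)), wt, mul_assoc,
      ← Real.exp_add, mul_left_comm, ← Real.exp_add]
    refine mul_le_mul_of_nonneg_left (Real.exp_le_exp.2 ?_) (by positivity)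
    rw [abs_mul]
    nlinarith [sq_nonneg (|x| - |t| / 2), sq_abs x, sq_abs t]

/-- termwise integration -/
lemma series_int {p : ℝ} (hp : -1 < p) (x : ℝ) (m : ℕ → ℕ) (f b : ℝ → ℝ)
    (hf : ∀ y, HasSum (fun n : ℕ => (-1 : ℝ) ^ n * y ^ m n / ((m n).factorial : ℝ)) (f y))
    (hb : ∀ y, HasSum (fun n : ℕ => y ^ m n / ((m n).factorial : ℝ)) (b y))
    (hbm : Measurable b)
    (hb0 : ∀ y, 0 ≤ y → |b y| ≤ Real.exp y) :
    HasSum (fun n : ℕ => (-1 : ℝ) ^ n * MM (p + m n) * x ^ m n / ((m n).factorial : ℝ))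
      (∫ t in Set.Ioi (0:ℝ), wt p t * f (x * t)) := by
  have hbs : ∀ t, HasSum (fun n => wt p t * (|x * t| ^ m n / ((m n).factorial : ℝ)))
    (wt p t * b |x * t|) := fun t => (hb _).mul_left _
  have key := hasSum_integral_of_dominated_convergence (μ := volume.restrict (Set.Ioi (0:ℝ)))
    (F := fun n t => wt p t * ((-1 : ℝ) ^ n * (x * t) ^ m n / ((m n).factorial : ℝ)))
    (f := fun t => wt p t * f (x * t))
    (fun n t => wt p t * (|x * t| ^ m n / ((m n).factorial : ℝ))) ?_ ?_ ?_ ?_ ?_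
  · suffices e : (fun n : ℕ => (-1 : ℝ) ^ n * MM (p + m n) * x ^ m n / ((m n).factorial : ℝ)) =
        fun n => ∫ t in Set.Ioi (0:ℝ),
          wt p t * ((-1 : ℝ) ^ n * (x * t) ^ m n / ((m n).factorial : ℝ)) by
      rw [e]; exact key
    funext n
    unfold MM
    rw [mul_assoc, mul_div_assoc, ← integral_mul_const, ← integral_div, ← integral_const_mul]
    refine setIntegral_congr_fun measurableSet_Ioi fun t ht => ?_
    simp only [wt_add_nat p (m n) ht, mul_pow]
    ring
  · intro n
    refine Measurable.aestronglyMeasurable ?_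
    unfold wt; fun_prop
  · intro n
    refine (ae_restrict_iff' measurableSet_Ioi).2 (Eventually.of_forall fun t ht => ?_)
    simp [abs_mul, abs_of_nonneg (wt_nonneg p ht)]
  · exact Eventually.of_forall fun t => (hbs t).summable
  · simp_rw [fun t => (hbs t).tsum_eq]
    refine Integrable.mono (wt_exp_integrable hp x) ?_ ?_
    · refine Measurable.aestronglyMeasurable ?_
      unfold wt; fun_prop
    · refine Eventually.of_forall fun t => ?_
      simp only [norm_mul, Real.norm_eq_abs, Real.abs_exp]
      gcongr
      exact hb0 _ (abs_nonneg _)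
  · exact Eventually.of_forall fun t => (hf _).mul_left _

lemma FF_re {p : ℝ} (hp : -1 < p) (x : ℝ) :
    (FF p x).re = ∫ t in Set.Ioi (0:ℝ), wt p t * Real.cos (x * t) := by
  have h := integral_re (𝕜 := ℂ) (integrableOn_mul_e (wt_integrableOn hp) x)
  rw [FF, ← RCLike.re_to_complex, ← h]
  congr 1; ext t
  rw [show Complex.I * x * t = ((x * t : ℝ) : ℂ) * Complex.I by push_cast; ring]
  rw [RCLike.re_to_complex, Complex.re_ofReal_mul, Complex.exp_ofReal_mul_I_re]

lemma FF_im {p : ℝ} (hp : -1 < p) (x : ℝ) :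
    (FF p x).im = ∫ t in Set.Ioi (0:ℝ), wt p t * Real.sin (x * t) := by
  have h := integral_im (𝕜 := ℂ) (integrableOn_mul_e (wt_integrableOn hp) x)
  rw [FF, ← RCLike.im_to_complex, ← h]
  congr 1; ext t
  rw [show Complex.I * x * t = ((x * t : ℝ) : ℂ) * Complex.I by push_cast; ring]
  rw [RCLike.im_to_complex, Complex.im_ofReal_mul, Complex.exp_ofReal_mul_I_im]

lemma FF_neg (p x : ℝ) : FF p (-x) = (starRingEnd ℂ) (FF p x) := by
  rw [FF, FF, ← integral_conj]
  congr 1; ext t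
  rw [map_mul, Complex.conj_ofReal, ← Complex.exp_conj]
  simp

lemma LamE_eq {p : ℝ} (hp : -1 < p) (x : ℝ) :
    LamE p x = (1 / Real.sqrt (2 * Real.pi)) * ((FF p x).re / MM p) := by
  have h := series_int hp x (fun n => 2 * n) Real.cos Real.cosh Real.hasSum_cos Real.hasSum_cosh
    Real.measurable_cosh (fun y hy => by
      rw [abs_of_pos (Real.cosh_pos y), ← Real.cosh_add_sinh]
      linarith [Real.sinh_nonneg_iff.2 hy])
  rw [← FF_re hp] at h
  have h2 := h.div_const (MM p)
  have hM := MM_pos hp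
  rw [LamE, ← h2.tsum_eq]
  congr 2; ext n
  rw [MM_prod hp]
  field_simp

lemma LamO_eq {p : ℝ} (hp : -1 < p) (x : ℝ) :
    LamO p x = (1 / Real.sqrt (2 * Real.pi)) * ((FF p x).im / MM (p + 1)) := by
  have h := series_int hp x (fun n => 2 * n + 1) Real.sin Real.sinh Real.hasSum_sin Real.hasSum_sinh
    Real.measurable_sinh (fun y hy => by
      rw [abs_of_nonneg (Real.sinh_nonneg_iff.2 hy), ← Real.cosh_add_sinh]
      linarith [Real.cosh_pos y])
  rw [← FF_im hp] at h
  have h2 := h.div_const (MM (p + 1))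
  have hM := MM_pos (by linarith : -1 < p + 1)
  rw [LamO, ← h2.tsum_eq]
  congr 2; ext n
  rw [show p + ((2 * n + 1 : ℕ) : ℝ) = (p + 1) + ((2 * n : ℕ) : ℝ) by push_cast; ring,
    MM_prod (by linarith)]
  have : ∀ k : ℕ, p + 1 + 2 * (k : ℝ) + 1 = p + 2 * ((k : ℝ) + 1) := fun k => by ring
  simp only [this]
  field_simp

lemma inversion {h G : ℝ → ℂ} (hc : Continuous h) (hi : Integrable h)
    (hG : ∀ x : ℝ, G x = ∫ t : ℝ, h t * Complex.exp (-(Complex.I * x * t)))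
    (hGi : Integrable G) (ω : ℝ) :
    ∫ x : ℝ, G x * Complex.exp (-(Complex.I * ω * x)) = 2 * Real.pi * h (-ω) := by
  have hF : FourierTransform.fourier h = fun w : ℝ => G (2 * Real.pi * w) := by
    ext w
    rw [Real.fourier_eq', hG]
    congr 1; ext t
    rw [smul_eq_mul, mul_comm]
    congr 2
    simp only [RCLike.inner_apply, conj_trivial]
    push_cast; ring
  have h2 : Integrable (FourierTransform.fourier h) := by
    rw [hF]; exact hGi.comp_mul_left' (by positivity)
  have h3 := congrFun (hc.fourierInv_fourier_eq hi h2) (-ω)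
  rw [Real.fourierInv_eq', hF] at h3
  have h4 := Measure.integral_comp_mul_left (fun x : ℝ => G x * Complex.exp (-(Complex.I * ω * x)))
    (2 * Real.pi)
  have h5 : ∫ v : ℝ, Complex.exp (((2 * Real.pi * inner ℝ v (-ω) : ℝ) : ℂ) * Complex.I) •
      G (2 * Real.pi * v) = ∫ v : ℝ, G (2 * Real.pi * v) *
        Complex.exp (-(Complex.I * ω * ((2 * Real.pi * v : ℝ) : ℂ))) := by
    congr 1; ext v
    rw [smul_eq_mul, mul_comm]
    congr 2
    simp only [RCLike.inner_apply, conj_trivial]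
    push_cast; ring
  rw [← h3, h5, h4, abs_of_pos (by positivity)]
  have : (Real.pi : ℂ) ≠ 0 := by exact_mod_cast Real.pi_ne_zero
  rw [Complex.real_smul]
  push_cast
  field_simp

lemma wt_abs_integrable {p : ℝ} (hp : 0 < p) : Integrable (fun t : ℝ => wt p |t|) := by
  have h0 : IntegrableOn (fun t : ℝ => wt p |t|) (Set.Ioi 0) :=
    (wt_integrableOn (by linarith : -1 < p)).congr_fun
      (fun t ht => by simp only [abs_of_pos (show (0:ℝ) < t from ht)]) measurableSet_Ioi
  have h1 : IntegrableOn (fun t : ℝ => wt p |t|) (Set.Iio 0) := by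
    have := h0.comp_neg
    simpa using this
  have h1' : IntegrableOn (fun t : ℝ => wt p |t|) (Set.Iic 0) :=
    (integrableOn_Iic_iff_integrableOn_Iio (by finiteness)).2 h1
  have := h1'.union h0
  rwa [Set.Iic_union_Ioi, integrableOn_univ] at this

lemma split_int {f : ℝ → ℂ} (hf : Integrable f) :
    ∫ t, f t = (∫ t in Set.Ioi (0:ℝ), f t) + ∫ t in Set.Ioi (0:ℝ), f (-t) := by
  rw [integral_comp_neg_Ioi, neg_zero, ← Set.compl_Ioi]
  exact (integral_add_compl measurableSet_Ioi hf).symm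

lemma mul_e_neg_integrable {h : ℝ → ℂ} (hi : Integrable h) (x : ℝ) :
    Integrable (fun t : ℝ => h t * Complex.exp (-(Complex.I * x * t))) := by
  refine hi.mul_bdd (c := 1) (Continuous.aestronglyMeasurable (by fun_prop)) ?_
  refine Eventually.of_forall fun t => ?_
  have := norm_e (-x) t
  push_cast at this
  rw [show -(Complex.I * x * t) = Complex.I * -x * t by ring]
  exact this.le

lemma ft_re {p : ℝ} (hp : 0 < p) (ω : ℝ) :
    ∫ x : ℝ, (((FF p x).re : ℝ) : ℂ) * Complex.exp (-(Complex.I * ω * x)) =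
      Real.pi * ((wt p |ω| : ℝ) : ℂ) := by
  have hi : Integrable (fun t : ℝ => ((wt p |t| : ℝ) : ℂ)) := (wt_abs_integrable hp).ofReal
  have hc : Continuous (fun t : ℝ => ((wt p |t| : ℝ) : ℂ)) :=
    Complex.continuous_ofReal.comp ((wt_continuous hp.le).comp continuous_abs)
  have := inversion (G := fun x => 2 * (((FF p x).re : ℝ) : ℂ)) hc hi ?_ ?_ ω
  · simp_rw [mul_assoc (2:ℂ)] at this
    rw [integral_const_mul, abs_neg] at this
    exact mul_left_cancel₀ two_ne_zero this
  · intro x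
    rw [split_int (mul_e_neg_integrable hi x)]
    have e1 : ∫ t in Set.Ioi (0:ℝ), ((wt p |t| : ℝ) : ℂ) * Complex.exp (-(Complex.I * x * t)) =
        FF p (-x) := by
      refine setIntegral_congr_fun measurableSet_Ioi fun t ht => ?_
      simp only [abs_of_pos (show (0:ℝ) < t from ht)]
      congr 2; push_cast; ring
    have e2 : ∫ t in Set.Ioi (0:ℝ), ((wt p |-t| : ℝ) : ℂ) *
        Complex.exp (-(Complex.I * x * (-t : ℝ))) = FF p x := by
      refine setIntegral_congr_fun measurableSet_Ioi fun t ht => ?_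
      simp only [abs_neg, abs_of_pos (show (0:ℝ) < t from ht)]
      congr 2; push_cast; ring
    rw [e1, e2, FF_neg, add_comm, Complex.add_conj]
    push_cast; ring
  · exact ((FF_integrable hp).re.ofReal (𝕜 := ℂ)).const_mul 2

lemma sign_wt_continuous {p : ℝ} (hp : 0 < p) : Continuous (fun t : ℝ => Real.sign t * wt p |t|) := by
  have h : (fun t : ℝ => Real.sign t * wt p |t|) = fun t => wt p (max t 0) - wt p (max (-t) 0) := by
    have h0 : wt p 0 = 0 := by simp [wt, hp.ne']
    ext t
    rcases lt_trichotomy t 0 with ht | rfl | ht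
    · simp [Real.sign_of_neg ht, abs_of_neg ht, max_eq_right ht.le, max_eq_left (neg_pos.2 ht).le, h0]
    · simp
    · simp [Real.sign_of_pos ht, abs_of_pos ht, max_eq_left ht.le, h0,
        max_eq_right (neg_neg_of_pos ht).le]
  rw [h]
  have := wt_continuous hp.le
  fun_prop

lemma ft_im {p : ℝ} (hp : 0 < p) (ω : ℝ) :
    ∫ x : ℝ, (((FF p x).im : ℝ) : ℂ) * Complex.exp (-(Complex.I * ω * x)) =
      -Complex.I * Real.pi * ((Real.sign ω * wt p |ω| : ℝ) : ℂ) := by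
  have hir : Integrable (fun t : ℝ => Real.sign t * wt p |t|) := by
    refine (wt_abs_integrable hp).mono (sign_wt_continuous hp).aestronglyMeasurable
      (Eventually.of_forall fun t => ?_)
    rw [norm_mul]
    refine mul_le_of_le_one_left (norm_nonneg _) ?_
    rcases Real.sign_apply_eq t with h | h | h <;> simp [h]
  have hi : Integrable (fun t : ℝ => ((Real.sign t * wt p |t| : ℝ) : ℂ)) := hir.ofReal
  have hc : Continuous (fun t : ℝ => ((Real.sign t * wt p |t| : ℝ) : ℂ)) :=
    Complex.continuous_ofReal.comp (sign_wt_continuous hp)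
  have := inversion (G := fun x => (-2 * Complex.I) * (((FF p x).im : ℝ) : ℂ)) hc hi ?_ ?_ ω
  · simp_rw [mul_assoc (-2 * Complex.I)] at this
    rw [integral_const_mul, abs_neg, Real.sign_neg] at this
    refine mul_left_cancel₀ (by simp : (-2 * Complex.I) ≠ 0) (this.trans ?_)
    push_cast
    linear_combination (-2 * Real.pi * (Real.sign ω : ℂ) * (wt p |ω| : ℂ)) * Complex.I_sq
  · intro x
    rw [split_int (mul_e_neg_integrable hi x)]
    have e1 : ∫ t in Set.Ioi (0:ℝ), ((Real.sign t * wt p |t| : ℝ) : ℂ) *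
        Complex.exp (-(Complex.I * x * t)) = FF p (-x) := by
      refine setIntegral_congr_fun measurableSet_Ioi fun t ht => ?_
      simp only [abs_of_pos (show (0:ℝ) < t from ht), Real.sign_of_pos ht, one_mul]
      congr 2; push_cast; ring
    have e2 : ∫ t in Set.Ioi (0:ℝ), ((Real.sign (-t) * wt p |-t| : ℝ) : ℂ) *
        Complex.exp (-(Complex.I * x * (-t : ℝ))) = -FF p x := by
      rw [FF, ← integral_neg]
      refine setIntegral_congr_fun measurableSet_Ioi fun t ht => ?_
      simp only [abs_neg, abs_of_pos (show (0:ℝ) < t from ht), Real.sign_neg, Real.sign_of_pos ht]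
      push_cast
      rw [neg_one_mul, neg_mul]
      congr 3; ring
    rw [e1, e2, FF_neg, ← sub_eq_add_neg, ← neg_sub, Complex.sub_conj]
    push_cast; ring
  · exact ((FF_integrable hp).im.ofReal (𝕜 := ℂ)).const_mul _

lemma LamE_zero (x : ℝ) : LamE 0 x = (1 / Real.sqrt (2 * Real.pi)) * Real.exp (-(1/2) * x ^ 2) := by
  have h := NormedSpace.expSeries_div_hasSum_exp (𝔸 := ℝ) (-(1/2) * x ^ 2)
  rw [← Real.exp_eq_exp_ℝ] at h
  rw [LamE, ← h.tsum_eq]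
  congr 2; ext n
  have key : ∀ n : ℕ, (∏ k ∈ Finset.range n, ((0:ℝ) + 2 * (k : ℝ) + 1)) * 2 ^ n * (n.factorial : ℝ) =
      ((2 * n).factorial : ℝ) := by
    intro n
    induction n with
    | zero => simp
    | succ n ih =>
      rw [show 2 * (n + 1) = 2 * n + 1 + 1 by ring, Nat.factorial_succ, Nat.factorial_succ,
        Nat.factorial_succ, Finset.prod_range_succ]
      push_cast
      rw [← ih]; ring
  rw [← key n]
  have h1 : (∏ k ∈ Finset.range n, ((0:ℝ) + 2 * (k : ℝ) + 1)) ≠ 0 :=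
    Finset.prod_ne_zero_iff.2 fun k _ => by positivity
  have h2 : (n.factorial : ℝ) ≠ 0 := by positivity
  rw [mul_pow (-(1/2) : ℝ), ← pow_mul, neg_pow (1/2 : ℝ), one_div, inv_pow]
  field_simp

/-- Fourier transforms of the kernels: for `p > 0` there are nonzero real constants `c, d` with
`𝓕(Λ^e_p)(ω) = c |ω|^p e^{-ω²/2}` and `𝓕(Λ^o_p)(ω) = i d sign(ω) |ω|^p e^{-ω²/2}`;
moreover `𝓕(Λ^e_0)(ω) = e^{-ω²/2}`. -/
theorem stmt_8 :
    (∀ p : ℝ, 0 < p →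
      ∃ c : ℝ, c ≠ 0 ∧ ∃ d : ℝ, d ≠ 0 ∧ ∀ ω : ℝ,
        (∫ x : ℝ, (LamE p x : ℂ) * Complex.exp (-(Complex.I * ω * x))) =
          (c : ℂ) * ((|ω| ^ p : ℝ) : ℂ) * ((Real.exp (-ω ^ 2 / 2) : ℝ) : ℂ) ∧
        (∫ x : ℝ, (LamO p x : ℂ) * Complex.exp (-(Complex.I * ω * x))) =
          Complex.I * (d : ℂ) * ((Real.sign ω : ℝ) : ℂ) * ((|ω| ^ p : ℝ) : ℂ) *
            ((Real.exp (-ω ^ 2 / 2) : ℝ) : ℂ)) ∧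
    (∀ ω : ℝ,
      (∫ x : ℝ, (LamE 0 x : ℂ) * Complex.exp (-(Complex.I * ω * x))) =
        ((Real.exp (-ω ^ 2 / 2) : ℝ) : ℂ)) := by
  refine ⟨fun p hp => ?_, fun ω => ?_⟩
  · have hM := MM_pos (by linarith : -1 < p)
    have hM1 := MM_pos (by linarith : -1 < p + 1)
    have hpi := Real.pi_pos
    have hwt : ∀ ω : ℝ, wt p |ω| = |ω| ^ p * Real.exp (-ω ^ 2 / 2) := fun ω => by
      rw [wt, sq_abs]; congr 2; ring
    refine ⟨(1 / Real.sqrt (2 * Real.pi)) / MM p * Real.pi, by positivity,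
      -((1 / Real.sqrt (2 * Real.pi)) / MM (p + 1) * Real.pi), ?_, fun ω => ⟨?_, ?_⟩⟩
    · exact neg_ne_zero.2 (by positivity)
    · have e : ∀ x : ℝ, (LamE p x : ℂ) * Complex.exp (-(Complex.I * ω * x)) =
          (((1 / Real.sqrt (2 * Real.pi)) / MM p : ℝ) : ℂ) *
          ((((FF p x).re : ℝ) : ℂ) * Complex.exp (-(Complex.I * ω * x))) := fun x => by
        rw [LamE_eq (by linarith)]; push_cast; ring
      simp_rw [e]
      rw [integral_const_mul, ft_re hp, hwt]
      push_cast; ring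
    · have e : ∀ x : ℝ, (LamO p x : ℂ) * Complex.exp (-(Complex.I * ω * x)) =
          (((1 / Real.sqrt (2 * Real.pi)) / MM (p + 1) : ℝ) : ℂ) *
          ((((FF p x).im : ℝ) : ℂ) * Complex.exp (-(Complex.I * ω * x))) := fun x => by
        rw [LamO_eq (by linarith)]; push_cast; ring
      simp_rw [e]
      rw [integral_const_mul, ft_im hp, hwt]
      push_cast; ring
  · have h := fourierIntegral_gaussian (b := ((1/2 : ℝ) : ℂ)) (by simp) (-(ω : ℂ))
    have e : ∀ x : ℝ, (LamE 0 x : ℂ) * Complex.exp (-(Complex.I * ω * x)) =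
        ((1 / Real.sqrt (2 * Real.pi) : ℝ) : ℂ) *
        (Complex.exp (Complex.I * (-(ω : ℂ)) * x) *
          Complex.exp (-((1/2 : ℝ) : ℂ) * (x : ℂ) ^ 2)) := fun x => by
      rw [LamE_zero]; push_cast
      rw [show -(Complex.I * (ω : ℂ) * x) = Complex.I * (-(ω : ℂ)) * x by ring]
      ring
    simp_rw [e]
    rw [integral_const_mul, h]
    have hs : ((Real.pi : ℂ) / ((1/2 : ℝ) : ℂ)) ^ (1 / 2 : ℂ) =
        ((Real.sqrt (2 * Real.pi) : ℝ) : ℂ) := by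
      rw [Real.sqrt_eq_rpow, Complex.ofReal_cpow (by positivity)]
      congr 1 <;> push_cast <;> ring
    rw [hs, ← mul_assoc, ← Complex.ofReal_mul,
      one_div_mul_cancel (by have := Real.pi_pos; positivity)]
    push_cast
    rw [one_mul]
    congr 1; ring
end

section
/- Let p > 0, let α, β be real numbers, and let f : ℝ → ℝ be continuous, bounded, and integrable. Define the kernel g(x,ρ) = ρ^{p+1} (α Λ^e_p(xρ) + β Λ^o_p(xρ)) for ρ > 0 and the convolution φ(x,ρ) = ∫_ℝ f(v) g(x−v, ρ) dv. Then φ is twice differentiable in x and differentiable in ρ on ℝ × (0,∞), and for all x ∈ ℝ and ρ > 0 one has ∂²φ/∂x²(x,ρ) = −ρ³ · ∂φ/∂ρ(x,ρ). Consequently the strong monotonicity condition holds: ∂φ/∂ρ(x,ρ) · ∂²φ/∂x²(x,ρ) ≤ 0, with strict inequality whenever ∂φ/∂ρ(x,ρ) ≠ 0 or ∂²φ/∂x²(x,ρ) ≠ 0. -/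
open MeasureTheory Filter Real

noncomputable def cE (p : ℝ) (n : ℕ) : ℝ := (-1 : ℝ) ^ n * ∏ k ∈ Finset.range n, (p + 2 * (k : ℝ) + 1)
noncomputable def cO (p : ℝ) (n : ℕ) : ℝ := (-1 : ℝ) ^ n * ∏ k ∈ Finset.range n, (p + 2 * ((k : ℝ) + 1))

theorem cE_succ (p : ℝ) (n : ℕ) : cE p (n+1) = -(p + 2 * n + 1) * cE p n := by
  simp only [cE, Finset.prod_range_succ]; ring

theorem cO_succ (p : ℝ) (n : ℕ) : cO p (n+1) = -(p + 2 * n + 2) * cO p n := by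
  simp only [cO, Finset.prod_range_succ]; ring

theorem cE_cO (p : ℝ) (n : ℕ) : cE p (n+1) = -(p + 1) * cO (p+1) n := by
  have h : ∀ k ∈ Finset.range n, p + 2 * (((k+1 : ℕ)) : ℝ) + 1 = p + 1 + 2 * ((k : ℝ) + 1) := by
    intro k _; push_cast; ring
  simp only [cE, cO, Finset.prod_range_succ', Finset.prod_congr rfl h]
  push_cast; ring

theorem cO_cE (p : ℝ) (n : ℕ) : cO p n = cE (p+1) n := by
  simp only [cE, cO]
  congr 1
  exact Finset.prod_congr rfl fun k _ => by ring

theorem summable_E (p : ℝ) (hp : 0 < p) (x : ℝ) :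
    Summable fun n : ℕ => cE p n * x ^ (2 * n) / ((2 * n).factorial : ℝ) := by
  apply summable_of_ratio_norm_eventually_le (r := 1/2) (by norm_num)
  obtain ⟨N, hN⟩ := exists_nat_ge ((p+1) * x^2)
  filter_upwards [eventually_ge_atTop N] with n hn
  have hn' : (N : ℝ) ≤ n := by exact_mod_cast hn
  have hF : (((2 * (n+1)).factorial : ℕ) : ℝ) = (2*n+2) * (2*n+1) * ((2*n).factorial : ℝ) := by
    rw [show 2 * (n+1) = 2*n+1+1 by ring, Nat.factorial_succ, Nat.factorial_succ]; push_cast; ring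
  have hFp : (0:ℝ) < ((2*n).factorial : ℝ) := by positivity
  have e : cE p (n+1) * x ^ (2 * (n+1)) / ((2 * (n+1)).factorial : ℝ)
      = -((p + 2 * n + 1) * x^2 / ((2*n+2) * (2*n+1))) * (cE p n * x ^ (2 * n) / ((2 * n).factorial : ℝ)) := by
    rw [cE_succ, hF, show 2 * (n+1) = 2*n+2 by ring, pow_add]
    field_simp
  rw [e, norm_mul, norm_neg]
  gcongr
  rw [Real.norm_of_nonneg (by positivity), div_le_iff₀ (by positivity)]
  have : (0:ℝ) ≤ n := by positivity
  nlinarith [mul_nonneg (mul_nonneg hp.le (sq_nonneg x)) this]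

theorem summable_O (p : ℝ) (hp : 0 < p) (x : ℝ) :
    Summable fun n : ℕ => cO p n * x ^ (2 * n + 1) / ((2 * n + 1).factorial : ℝ) := by
  apply summable_of_ratio_norm_eventually_le (r := 1/2) (by norm_num)
  obtain ⟨N, hN⟩ := exists_nat_ge ((p+1) * x^2)
  filter_upwards [eventually_ge_atTop N] with n hn
  have hn' : (N : ℝ) ≤ n := by exact_mod_cast hn
  have hF : (((2 * (n+1) + 1).factorial : ℕ) : ℝ) = (2*n+3) * (2*n+2) * ((2*n+1).factorial : ℝ) := by
    rw [show 2 * (n+1) + 1 = 2*n+1+1+1 by ring, Nat.factorial_succ (2*n+1+1), Nat.factorial_succ (2*n+1)]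
    push_cast; ring
  have hFp : (0:ℝ) < ((2*n+1).factorial : ℝ) := by positivity
  have e : cO p (n+1) * x ^ (2 * (n+1) + 1) / ((2 * (n+1) + 1).factorial : ℝ)
      = -((p + 2 * n + 2) * x^2 / ((2*n+3) * (2*n+2))) *
        (cO p n * x ^ (2 * n + 1) / ((2 * n + 1).factorial : ℝ)) := by
    rw [cO_succ, hF, show 2 * (n+1) + 1 = 2*n+1+2 by ring, pow_add x (2*n+1) 2]
    field_simp
  rw [e, norm_mul, norm_neg]
  gcongr
  rw [Real.norm_of_nonneg (by positivity), div_le_iff₀ (by positivity)]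
  have : (0:ℝ) ≤ n := by positivity
  nlinarith [mul_nonneg (mul_nonneg hp.le (sq_nonneg x)) this]

theorem deriv_series (a : ℕ → ℝ) (m : ℕ → ℕ)
    (hs : ∀ R : ℝ, Summable fun n => a n * R ^ (m n) / ((m n).factorial : ℝ)) (x : ℝ) :
    HasDerivAt (fun y => ∑' n, a n * y ^ (m n + 1) / ((m n + 1).factorial : ℝ))
      (∑' n, a n * x ^ (m n) / ((m n).factorial : ℝ)) x := by
  refine hasDerivAt_tsum_of_isPreconnected
    (g := fun n y => a n * y ^ (m n + 1) / ((m n + 1).factorial : ℝ))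
    (g' := fun n y => a n * y ^ (m n) / ((m n).factorial : ℝ)) (t := Metric.ball (0:ℝ) (|x|+1)) (y₀ := 0)
    (hs (|x|+1)).norm Metric.isOpen_ball (convex_ball (0:ℝ) (|x|+1)).isPreconnected ?_ ?_ ?_ ?_ ?_
  · intro n y _
    have h := (((hasDerivAt_pow (m n + 1) y).const_mul (a n)).div_const ((m n + 1).factorial : ℝ))
    refine h.congr_deriv ?_
    rw [Nat.factorial_succ]
    have : (0:ℝ) < ((m n).factorial : ℝ) := by positivity
    push_cast
    try simp only [Nat.add_sub_cancel]
    field_simp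
  · intro n y hy
    rw [mem_ball_zero_iff, Real.norm_eq_abs] at hy
    simp only [norm_div, norm_mul, norm_pow, Real.norm_eq_abs]
    rw [abs_of_nonneg (by positivity : 0 ≤ |x| + 1)]
    gcongr
  · simp; positivity
  · simp
  · simp

theorem LamE_eq_s10 (p x : ℝ) : LamE p x = (1 / Real.sqrt (2 * Real.pi)) *
    ∑' n : ℕ, cE p n * x ^ (2 * n) / ((2 * n).factorial : ℝ) := rfl
theorem LamO_eq_s10 (p x : ℝ) : LamO p x = (1 / Real.sqrt (2 * Real.pi)) *
    ∑' n : ℕ, cO p n * x ^ (2 * n + 1) / ((2 * n + 1).factorial : ℝ) := rfl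

theorem LamO_deriv (p : ℝ) (hp : 0 < p) (x : ℝ) : HasDerivAt (LamO p) (LamE (p+1) x) x := by
  have h := deriv_series (cO p) (fun n => 2 * n)
    (fun R => by simp only [cO_cE]; exact summable_E (p+1) (by linarith) R) x
  have h2 := h.const_mul (1 / Real.sqrt (2 * Real.pi))
  simp only [cO_cE] at h2
  rw [LamE_eq_s10]
  have e : LamO p = fun y => 1 / √(2 * π) *
      ∑' n : ℕ, cE (p + 1) n * y ^ (2 * n + 1) / ((2 * n + 1).factorial : ℝ) := by
    funext y
    rw [LamO_eq_s10]; simp only [cO_cE]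
  rw [e]; exact h2

theorem LamE_deriv (p : ℝ) (hp : 0 < p) (x : ℝ) :
    HasDerivAt (LamE p) (-(p+1) * LamO (p+1) x) x := by
  have h := deriv_series (fun n => -(p+1) * cO (p+1) n) (fun n => 2 * n + 1)
    (fun R => by
      simpa only [mul_assoc, mul_div_assoc] using
        (summable_O (p+1) (by linarith) R).mul_left (-(p+1))) x
  have h2 := (h.const_add 1).const_mul (1 / Real.sqrt (2 * Real.pi))
  have e : LamE p = fun y => 1 / √(2 * π) * (1 + ∑' n : ℕ, -(p + 1) * cO (p + 1) n *
      y ^ (2 * n + 1 + 1) / ((2 * n + 1 + 1).factorial : ℝ)) := by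
    funext y
    rw [LamE_eq_s10, (summable_E p hp y).tsum_eq_zero_add]
    simp only [cE_cO]
    have e0 : cE p 0 * y ^ (2 * 0) / ((2 * 0).factorial : ℝ) = 1 := by simp [cE]
    rw [e0]
    rfl
  rw [e]
  refine h2.congr_deriv ?_
  · rw [LamO_eq_s10]
    simp only [mul_assoc, mul_div_assoc, tsum_mul_left]
    ring

theorem LamE_ode (p : ℝ) (hp : 0 < p) (x : ℝ) :
    LamE (p+2) x = LamE p x - x * LamO (p+1) x := by
  have h0 : p + 1 ≠ 0 := by linarith
  rw [LamE_eq_s10, LamE_eq_s10, LamO_eq_s10]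
  rw [mul_left_comm, ← mul_sub, ← tsum_mul_left (a := x), (summable_E p hp x).tsum_eq_zero_add,
    (summable_E (p+2) (by linarith) x).tsum_eq_zero_add]
  have s1 := (summable_nat_add_iff 1).2 (summable_E p hp x)
  have s2 := (summable_O (p+1) (by linarith) x).mul_left x
  rw [add_sub_assoc, ← s1.tsum_sub s2]
  congr 2
  refine tsum_congr fun n => ?_
  have e1 := cE_cO p n
  have e2 : cE (p+2) (n+1) = -(p + 2 * n + 3) * cO (p+1) n := by
    rw [cE_succ, cO_cE]; ring_nf
  rw [e1, e2, show 2 * (n+1) = 2*n+1+1 by ring, Nat.factorial_succ (2*n+1)]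
  have : (0:ℝ) < ((2*n+1).factorial : ℝ) := by positivity
  push_cast
  field_simp
  ring

theorem LamO_ode (p : ℝ) (hp : 0 < p) (x : ℝ) :
    (p+2) * LamO (p+2) x = (p+1) * LamO p x + x * LamE (p+1) x := by
  rw [LamE_eq_s10, LamO_eq_s10, LamO_eq_s10]
  rw [mul_left_comm, mul_left_comm (p+1), mul_left_comm x, ← mul_add]
  simp only [← tsum_mul_left]
  rw [← ((summable_O p hp x).mul_left (p+1)).tsum_add ((summable_E (p+1) (by linarith) x).mul_left x)]
  simp only [tsum_mul_left]
  rw [← tsum_mul_left]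
  congr 1
  refine tsum_congr fun n => ?_
  have e1 := cE_cO (p+1) n
  have e2 := cE_succ (p+1) n
  rw [← cO_cE p, ← cO_cE p] at e2
  rw [← cO_cE p] at e1
  rw [← cO_cE p]
  have e3 : (p+2) * cO (p+2) n = (p + 2*n+2) * cO p n := by
    rw [show p + 1 + 1 = p + 2 by ring] at e1
    linarith
  have e4 : (2*n+1).factorial = (2*n+1) * (2*n).factorial := Nat.factorial_succ _
  rw [mul_div_assoc, ← mul_assoc, e3, e4]
  have : (0:ℝ) < ((2*n).factorial : ℝ) := by positivity
  push_cast
  field_simp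
  ring

theorem energy (q : ℝ) (hq : 0 < q) (u u1 u2 : ℝ → ℝ) (h1 : ∀ x, HasDerivAt u (u1 x) x)
    (h2 : ∀ x, HasDerivAt u1 (u2 x) x) (ode : ∀ x, u2 x = -(x * u1 x + q * u x)) :
    ∃ B, ∀ x, |u x| ≤ B ∧ |u1 x| ≤ B := by
  set E : ℝ → ℝ := fun x => u1 x ^ 2 + q * u x ^ 2 with hE
  have hd : ∀ x, HasDerivAt E (-2 * x * u1 x ^ 2) x := by
    intro x
    have := ((h2 x).pow 2).add (((h1 x).pow 2).const_mul q)
    refine HasDerivAt.congr_deriv this ?_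
    rw [ode]; push_cast; ring
  have hc : Continuous E := continuous_iff_continuousAt.2 fun x => (hd x).continuousAt
  have hb : ∀ x, E x ≤ E 0 := by
    intro x
    rcases le_total 0 x with hx | hx
    · have : AntitoneOn E (Set.Ici 0) := by
        apply antitoneOn_of_deriv_nonpos (convex_Ici 0) hc.continuousOn
        · exact fun y _ => (hd y).differentiableAt.differentiableWithinAt
        · intro y hy
          rw [interior_Ici] at hy
          rw [(hd y).deriv]
          have : 0 ≤ y * u1 y ^ 2 := mul_nonneg (le_of_lt hy) (sq_nonneg _)
          linarith
      exact this Set.self_mem_Ici hx hx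
    · have : MonotoneOn E (Set.Iic 0) := by
        apply monotoneOn_of_deriv_nonneg (convex_Iic 0) hc.continuousOn
        · exact fun y _ => (hd y).differentiableAt.differentiableWithinAt
        · intro y hy
          rw [interior_Iic] at hy
          rw [(hd y).deriv]
          have : y * u1 y ^ 2 ≤ 0 := mul_nonpos_of_nonpos_of_nonneg (le_of_lt hy) (sq_nonneg _)
          linarith
      exact this hx Set.self_mem_Iic hx
  refine ⟨max (√(E 0 / q)) (√(E 0)), fun x => ⟨le_max_of_le_left ?_, le_max_of_le_right ?_⟩⟩
  · apply Real.abs_le_sqrt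
    rw [le_div_iff₀ hq]
    have := hb x
    have h3 : E x = u1 x ^ 2 + q * u x ^ 2 := rfl
    nlinarith [sq_nonneg (u1 x)]
  · apply Real.abs_le_sqrt
    have := hb x
    have h3 : E x = u1 x ^ 2 + q * u x ^ 2 := rfl
    nlinarith [mul_nonneg hq.le (sq_nonneg (u x))]

theorem conv_deriv (f K K1 : ℝ → ℝ) (hf : Continuous f) (hfi : Integrable f)
    (hK : ∀ x, HasDerivAt K (K1 x) x) (hK1 : Continuous K1) (B : ℝ) (hB : ∀ x, |K x| ≤ B)
    (hB1 : ∀ x, |K1 x| ≤ B) (x : ℝ) :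
    HasDerivAt (fun y => ∫ v, f v * K (y - v)) (∫ v, f v * K1 (x - v)) x := by
  have hKc : Continuous K := continuous_iff_continuousAt.2 fun x => (hK x).continuousAt
  have hm : ∀ y, AEStronglyMeasurable (fun v => f v * K (y - v)) volume := fun y =>
    (by fun_prop : Continuous fun v => f v * K (y - v)).aestronglyMeasurable
  refine (hasDerivAt_integral_of_dominated_loc_of_deriv_le (s := Set.univ)
    (F := fun y v => f v * K (y - v)) (F' := fun y v => f v * K1 (y - v))
    (bound := fun v => ‖f v‖ * B) Filter.univ_mem (Eventually.of_forall hm) ?_ ?_ ?_ ?_ ?_).2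
  · refine (hfi.norm.mul_const B).mono' (hm x) (Eventually.of_forall fun v => ?_)
    rw [norm_mul]; gcongr; exact hB _
  · exact (by fun_prop : Continuous fun v => f v * K1 (x - v)).aestronglyMeasurable
  · refine Eventually.of_forall fun v y _ => ?_
    rw [norm_mul]; gcongr; exact hB1 _
  · exact hfi.norm.mul_const B
  · refine Eventually.of_forall fun v y _ => ?_
    exact (HasDerivAt.comp_sub_const y v (hK (y - v))).const_mul (f v)

theorem scale_deriv (p : ℝ) (hp : 0 < p) (f u u1 u2 : ℝ → ℝ) (hf : Continuous f) (hfi : Integrable f)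
    (h1 : ∀ x, HasDerivAt u (u1 x) x) (hu2 : Continuous u2)
    (ode : ∀ x, u2 x = -(x * u1 x + (p+1) * u x)) (B : ℝ) (hB : ∀ x, |u x| ≤ B)
    (hB2 : ∀ x, |u2 x| ≤ B) (x ρ : ℝ) (hρ : 0 < ρ) :
    HasDerivAt (fun r => ∫ v, f v * (r ^ (p+1) * u ((x - v) * r)))
      (∫ v, f v * (-(ρ ^ p) * u2 ((x - v) * ρ))) ρ := by
  have huc : Continuous u := continuous_iff_continuousAt.2 fun x => (h1 x).continuousAt
  have hB0 : 0 ≤ B := (abs_nonneg _).trans (hB 0)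
  have hm : ∀ r, AEStronglyMeasurable (fun v => f v * (r ^ (p+1) * u ((x - v) * r))) volume := fun y =>
    (by fun_prop : Continuous fun v => f v * (y ^ (p+1) * u ((x - v) * y))).aestronglyMeasurable
  refine (hasDerivAt_integral_of_dominated_loc_of_deriv_le (s := Set.Ioo 0 (2 * ρ))
    (F := fun r v => f v * (r ^ (p+1) * u ((x - v) * r)))
    (F' := fun r v => f v * (-(r ^ p) * u2 ((x - v) * r)))
    (bound := fun v => ‖f v‖ * ((2 * ρ) ^ p * B)) (Ioo_mem_nhds hρ (by linarith))
    (Eventually.of_forall hm) ?_ ?_ ?_ ?_ ?_).2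
  · refine (hfi.norm.mul_const (ρ ^ (p+1) * B)).mono' (hm ρ) (Eventually.of_forall fun v => ?_)
    rw [norm_mul, norm_mul, Real.norm_of_nonneg (by positivity : 0 ≤ ρ ^ (p+1))]
    gcongr; exact hB _
  · exact (by fun_prop : Continuous fun v => f v * (-(ρ ^ p) * u2 ((x - v) * ρ))).aestronglyMeasurable
  · refine Eventually.of_forall fun v r hr => ?_
    have := hr.1.le
    rw [norm_mul, norm_mul, norm_neg, Real.norm_of_nonneg (by positivity : 0 ≤ r ^ p)]
    gcongr
    · exact hr.2.le
    · exact hB2 _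
  · exact hfi.norm.mul_const _
  · refine Eventually.of_forall fun v r hr => ?_
    refine HasDerivAt.const_mul (f v) ?_
    have a := Real.hasDerivAt_rpow_const (x := r) (p := p+1) (Or.inl hr.1.ne')
    have b : HasDerivAt (fun r => u ((x - v) * r)) (u1 ((x-v)*r) * ((x - v) * 1)) r :=
      (h1 ((x - v) * r)).comp r ((hasDerivAt_id r).const_mul (x - v))
    refine (a.mul b).congr_deriv ?_
    rw [ode, Real.rpow_add hr.1, Real.rpow_one, add_sub_cancel_right]
    ring

/-- For the kernel `g(x,ρ) = ρ^{p+1}(α Λ^e_p(xρ) + β Λ^o_p(xρ))` and a continuous, bounded,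
integrable signal `f`, the convolution `φ(x,ρ) = ∫ f(v) g(x-v,ρ) dv` is twice differentiable
in `x`, differentiable in `ρ`, satisfies `φ_{xx} = -ρ³ φ_ρ`, and the strong monotonicity
condition `φ_ρ · φ_{xx} ≤ 0`, strictly whenever one of the two factors is nonzero. -/
theorem stmt_10 (p : ℝ) (hp : 0 < p) (α β : ℝ) (f : ℝ → ℝ)
    (hf_cont : Continuous f) (hf_bdd : ∃ M, ∀ x, |f x| ≤ M) (hf_int : Integrable f)
    (φ : ℝ → ℝ → ℝ)
    (hφ : ∀ x ρ, φ x ρ =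
      ∫ v : ℝ, f v * (ρ ^ (p + 1) * (α * LamE p ((x - v) * ρ) + β * LamO p ((x - v) * ρ)))) :
    ∀ x : ℝ, ∀ ρ : ℝ, 0 < ρ →
      DifferentiableAt ℝ (fun y => φ y ρ) x ∧
      DifferentiableAt ℝ (deriv fun y => φ y ρ) x ∧
      DifferentiableAt ℝ (fun r => φ x r) ρ ∧
      deriv (deriv fun y => φ y ρ) x = -ρ ^ 3 * deriv (fun r => φ x r) ρ ∧
      deriv (fun r => φ x r) ρ * deriv (deriv fun y => φ y ρ) x ≤ 0 ∧
      ((deriv (fun r => φ x r) ρ ≠ 0 ∨ deriv (deriv fun y => φ y ρ) x ≠ 0) →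
        deriv (fun r => φ x r) ρ * deriv (deriv fun y => φ y ρ) x < 0) := by
  intro x ρ hρ
  set u : ℝ → ℝ := fun y => α * LamE p y + β * LamO p y with hu
  set u1 : ℝ → ℝ := fun y => α * (-(p+1) * LamO (p+1) y) + β * LamE (p+1) y with hu1
  set u2 : ℝ → ℝ := fun y => α * (-(p+1) * LamE (p+1+1) y) + β * (-(p+1+1) * LamO (p+1+1) y) with hu2
  have hp1 : 0 < p + 1 := by linarith
  have hp2 : 0 < p + 1 + 1 := by linarith
  have h1 : ∀ y, HasDerivAt u (u1 y) y := fun y =>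
    ((LamE_deriv p hp y).const_mul α).add ((LamO_deriv p hp y).const_mul β)
  have h2 : ∀ y, HasDerivAt u1 (u2 y) y := fun y =>
    (((LamO_deriv (p+1) hp1 y).const_mul (-(p+1))).const_mul α).add
      ((LamE_deriv (p+1) hp1 y).const_mul β)
  have h3 : ∀ y, HasDerivAt u2 (-(y * u2 y + (p+1+1) * u1 y)) y := by
    intro y
    have := (((LamE_deriv (p+1+1) hp2 y).const_mul (-(p+1))).const_mul α).add
      (((LamO_deriv (p+1+1) hp2 y).const_mul (-(p+1+1))).const_mul β)
    refine HasDerivAt.congr_deriv this ?_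
    have a := LamO_ode (p+1) hp1 y
    have b := LamE_ode (p+1) hp1 y
    rw [show p + 1 + 2 = p+1+1+1 by ring] at a b
    simp only [hu2, hu1]
    rw [b]
    linear_combination (α * (p+1)) * a
  have ode : ∀ y, u2 y = -(y * u1 y + (p+1) * u y) := by
    intro y
    have a := LamO_ode p hp y
    have b := LamE_ode p hp y
    rw [show p + 2 = p+1+1 by ring] at a b
    simp only [hu2, hu1, hu]
    rw [b]
    linear_combination (-β) * a
  obtain ⟨B1, hB1⟩ := energy (p+1) hp1 u u1 u2 h1 h2 ode
  obtain ⟨B2, hB2⟩ := energy (p+1+1) hp2 u1 u2 _ h2 h3 (fun _ => rfl)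
  have c1 : Continuous u1 := continuous_iff_continuousAt.2 fun x => (h2 x).continuousAt
  have c2 : Continuous u2 := continuous_iff_continuousAt.2 fun x => (h3 x).continuousAt
  set C := max B1 B2 with hC
  have b0 : ∀ y, |u y| ≤ C := fun y => (hB1 y).1.trans (le_max_left _ _)
  have b1 : ∀ y, |u1 y| ≤ C := fun y => (hB1 y).2.trans (le_max_left _ _)
  have b2 : ∀ y, |u2 y| ≤ C := fun y => (hB2 y).2.trans (le_max_right _ _)
  have hC0 : 0 ≤ C := (abs_nonneg _).trans (b0 0)
  have key : ∀ (w : ℝ → ℝ), (∀ y, |w y| ≤ C) → ∀ c y : ℝ, |c * w y| ≤ |c| * C := by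
    intro w hw c y; rw [abs_mul]; gcongr; exact hw y
  have sc : ∀ (w w1 : ℝ → ℝ), (∀ y, HasDerivAt w (w1 y) y) → ∀ c z : ℝ,
      HasDerivAt (fun z => c * w (z * ρ)) ((c * ρ) * w1 (z * ρ)) z := by
    intro w w1 hw c z
    have := ((hw (z * ρ)).comp z ((hasDerivAt_id z).mul_const ρ)).const_mul c
    refine HasDerivAt.congr_deriv this ?_
    ring
  have D1 : ∀ y, HasDerivAt (fun y => φ y ρ)
      (∫ v, f v * ((ρ ^ (p+1) * ρ) * u1 ((y - v) * ρ))) y := by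
    intro y
    have := conv_deriv f (fun z => ρ ^ (p+1) * u (z * ρ)) (fun z => (ρ ^ (p+1) * ρ) * u1 (z * ρ))
      hf_cont hf_int (sc u u1 h1 _) (by fun_prop)
      (max (|ρ ^ (p+1)| * C) (|ρ ^ (p+1) * ρ| * C))
      (fun z => (key u b0 _ _).trans (le_max_left _ _))
      (fun z => (key u1 b1 _ _).trans (le_max_right _ _)) y
    have e : (fun y => φ y ρ) = fun y => ∫ v, f v * (ρ ^ (p+1) * u ((y - v) * ρ)) :=
      funext fun y => hφ y ρ
    rw [e]; exact this
  have D1' : (deriv fun y => φ y ρ) = fun y => ∫ v, f v * ((ρ ^ (p+1) * ρ) * u1 ((y - v) * ρ)) :=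
    funext fun y => (D1 y).deriv
  have D2 : HasDerivAt (deriv fun y => φ y ρ)
      (∫ v, f v * ((ρ ^ (p+1) * ρ * ρ) * u2 ((x - v) * ρ))) x := by
    rw [D1']
    exact conv_deriv f (fun z => (ρ ^ (p+1) * ρ) * u1 (z * ρ))
      (fun z => (ρ ^ (p+1) * ρ * ρ) * u2 (z * ρ))
      hf_cont hf_int (sc u1 u2 h2 _) (by fun_prop)
      (max (|ρ ^ (p+1) * ρ| * C) (|ρ ^ (p+1) * ρ * ρ| * C))
      (fun z => (key u1 b1 _ _).trans (le_max_left _ _))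
      (fun z => (key u2 b2 _ _).trans (le_max_right _ _)) x
  have D3 : HasDerivAt (fun r => φ x r) (∫ v, f v * (-(ρ ^ p) * u2 ((x - v) * ρ))) ρ := by
    have e : (fun r => φ x r) = fun r => ∫ v, f v * (r ^ (p+1) * u ((x - v) * r)) :=
      funext fun r => hφ x r
    rw [e]
    exact scale_deriv p hp f u u1 u2 hf_cont hf_int h1 c2 ode C b0 b2 x ρ hρ
  have heq : deriv (deriv fun y => φ y ρ) x = -ρ ^ 3 * deriv (fun r => φ x r) ρ := by
    rw [D2.deriv, D3.deriv, ← integral_const_mul]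
    congr 1
    funext v
    rw [Real.rpow_add hρ, Real.rpow_one]
    ring
  have h3 : 0 < ρ ^ 3 := by positivity
  refine ⟨(D1 x).differentiableAt, D2.differentiableAt, D3.differentiableAt, heq, ?_, ?_⟩
  · rw [heq]
    nlinarith [mul_nonneg h3.le (sq_nonneg (deriv (fun r => φ x r) ρ))]
  · intro h
    have hne : deriv (fun r => φ x r) ρ ≠ 0 := by
      rcases h with h | h
      · exact h
      · intro h0; apply h; rw [heq, h0, mul_zero]
    rw [heq]
    have := mul_pos h3 (sq_pos_of_ne_zero hne)
    nlinarith
end
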